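/- Let X be a separable and reflexive real Banach space, Φ : X → ℝ a sequentially weakly lower semicontinuous C¹ functional (i.e., Φ(x) ≤ liminf Φ(x_n) whenever x_n converges weakly to x) that belongs to the class 𝔚_X, is bounded on each bounded subset of X, and whose derivative Φ' : X → X* admits a continuous inverse; let J : X → ℝ be a C¹ functional whose derivative J' : X → X* is a compact map. Assume Φ has a strict local minimum at x₀ with Φ(x₀) = J(x₀) = 0. Let 0 < a ≤ b be real numbers and assume: (i) there exists x̄ ∈ X with Φ(x̄) > 0 and J(x̄) > Φ(x̄)/a; (ii) there exist ε > 0 with ε ≤ 1/b, R > 0 and r > 0 such that J(x) ≤ (1/b − ε)·Φ(x) for every x with ‖x‖ ≥ R, and J(x) ≤ (1/b − ε)·Φ(x) for every x with 0 < ‖x − x₀‖ ≤ r. Then there exists γ > 0 with the following property: for every λ ∈ [a, b] and every C¹ functional Ψ : X → ℝ whose derivative Ψ' : X → X* is a compact map, there exists δ₀ > 0 such that for each μ ∈ [0, δ₀] the equation Φ'(u) = λ J'(u) + μ Ψ'(u) has at least three distinct solutions u in X with ‖u‖ ≤ γ. -/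

import Mathlib

open Filter Topology Bornology

/-!
By Ekeland's variational principle, a `C¹` functional `Φ` whose derivative has a continuous left
inverse grows at least linearly away from a local minimum `x₀`: almost minimizers are almost
critical, and almost critical points are close to `x₀`. The mountain pass theorem then makes
`x₀` a global minimum, a second critical point being excluded by the injectivity of `Φ'`, so `Φ`
is coercive. Consequently `Φ - λJ` is coercive, uniformly in `λ ∈ [a, b]`, vanishes at `x₀`, is
bounded below by a positive constant on a small sphere around `x₀`, and is negative at `x̄`.
This geometry survives the addition of a small bounded perturbation and produces three critical
points: a minimizer in the ball around `x₀`, a global minimizer, and a mountain pass point. The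
maximum of `Φ - λJ` on the segment `[x₀, x̄]` bounds its values at these three points, hence
their norms by some `γ` that does not depend on the perturbation; so an arbitrary `Ψ` may first
be truncated to a bounded functional with the same derivative on the ball of radius `γ`.
-/

section Ekeland

variable {Y : Type*} [PseudoMetricSpace Y] {f : Y → ℝ} {ε : ℝ}

lemma cauchySeq_of_add_mul_dist_le {u : ℕ → Y} {a : ℕ → ℝ} {L : ℝ} (hε : 0 < ε)
    (ha : Tendsto a atTop (𝓝 L)) (hL : ∀ n, L ≤ a n)
    (h : ∀ n m, n ≤ m → a m + ε * dist (u n) (u m) ≤ a n) : CauchySeq u := by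
  refine cauchySeq_of_le_tendsto_0' (fun n => (a n - L) / ε) (fun n m hnm => ?_) ?_
  · rw [le_div_iff₀ hε]
    linarith [h n m hnm, hL m]
  · simpa using (ha.sub_const L).div_const ε

lemma exists_near_minimizer_add_mul_dist_le (hf : BddBelow (Set.range f)) (y : Y) {δ : ℝ}
    (hδ : 0 < δ) :
    ∃ z, f z + ε * dist y z ≤ f y ∧ ∀ w, f w + ε * dist y w ≤ f y → f z ≤ f w + δ := by
  set S := {z | f z + ε * dist y z ≤ f y}
  have hS : (f '' S).Nonempty := ⟨f y, y, by simp [S], rfl⟩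
  obtain ⟨_, ⟨z, hz, rfl⟩, hlt⟩ := Real.lt_sInf_add_pos hS hδ
  refine ⟨z, hz, fun w hw => hlt.le.trans ?_⟩
  gcongr
  exact csInf_le (hf.mono (Set.image_subset_range f S)) ⟨w, hw, rfl⟩

lemma exists_seq_near_minimizers (hf : BddBelow (Set.range f)) (hε : 0 ≤ ε) (x : Y) :
    ∃ u : ℕ → Y, u 0 = x ∧ (∀ n m, n ≤ m → f (u m) + ε * dist (u n) (u m) ≤ f (u n)) ∧
      ∀ n z, f z + ε * dist (u n) z ≤ f (u n) → f (u (n + 1)) ≤ f z + 1 / ((n : ℝ) + 1) := by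
  choose T hT hTmin using fun (n : ℕ) (y : Y) =>
    exists_near_minimizer_add_mul_dist_le (ε := ε) hf y (Nat.one_div_pos_of_nat (α := ℝ) (n := n))
  refine ⟨fun n => Nat.rec x T n, rfl, fun n m hnm => ?_, fun n => hTmin n _⟩
  set u : ℕ → Y := fun n => Nat.rec x T n
  induction m, hnm using Nat.le_induction with
  | base => simp
  | succ m _ ih =>
    have hstep : f (u (m + 1)) + ε * dist (u m) (u (m + 1)) ≤ f (u m) := hT m (u m)
    have htri := mul_le_mul_of_nonneg_left (dist_triangle (u n) (u m) (u (m + 1))) hε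
    linarith

theorem ekeland_variational_principle [CompleteSpace Y] (hf : LowerSemicontinuous f)
    (hbdd : BddBelow (Set.range f)) (hε : 0 < ε) (x : Y) :
    ∃ y, f y + ε * dist x y ≤ f x ∧ ∀ z, f y ≤ f z + ε * dist y z := by
  obtain ⟨u, rfl, hdesc, hmin⟩ := exists_seq_near_minimizers hbdd hε.le x
  have hanti : Antitone fun n => f (u n) := fun n m hnm =>
    (le_add_of_nonneg_right (by positivity)).trans (hdesc n m hnm)
  have hlim : Tendsto (fun n => f (u n)) atTop (𝓝 (⨅ n, f (u n))) :=
    tendsto_atTop_ciInf hanti (hbdd.mono (Set.range_comp_subset_range u f))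
  set L := ⨅ n, f (u n)
  obtain ⟨y, hy⟩ := cauchySeq_tendsto_of_complete
    (cauchySeq_of_add_mul_dist_le hε hlim (hanti.le_of_tendsto hlim) hdesc)
  have hfy : f y ≤ L := le_of_forall_lt_imp_le_of_dense fun c hc =>
    ge_of_tendsto hlim ((hy.eventually (hf y c hc)).mono fun _ => le_of_lt)
  have hdist : ∀ n, L + ε * dist (u n) y ≤ f (u n) := fun n =>
    le_of_tendsto (hlim.add ((tendsto_const_nhds.dist hy).const_mul ε))
      ((eventually_ge_atTop n).mono (hdesc n))
  refine ⟨y, by linarith [hdist 0], fun z => ?_⟩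
  by_contra! hz
  have hbelow : ∀ n, f (u (n + 1)) ≤ f z + 1 / ((n : ℝ) + 1) := fun n => hmin n z <| by
    have htri := mul_le_mul_of_nonneg_left (dist_triangle (u n) y z) hε.le
    linarith [hdist n]
  have hLz : L ≤ f z + 0 := le_of_tendsto_of_tendsto' (hlim.comp (tendsto_add_atTop_nat 1))
    (tendsto_one_div_add_atTop_nhds_zero_nat.const_add (f z)) hbelow
  linarith [mul_nonneg hε.le (dist_nonneg (x := y) (y := z))]

end Ekeland

section AlmostCritical

variable {X : Type*} [NormedAddCommGroup X] [NormedSpace ℝ X]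

lemma norm_le_of_hasFDerivAt_of_eventually_le_add_mul_dist {f : X → ℝ} {f' : X →L[ℝ] ℝ} {y : X}
    {ε : ℝ} (hf : HasFDerivAt f f' y) (hε : 0 ≤ ε) (h : ∀ᶠ z in 𝓝 y, f y ≤ f z + ε * dist y z) :
    ‖f'‖ ≤ ε := by
  refine le_of_forall_pos_le_add fun δ hδ => ?_
  have hbound : ∀ᶠ v in 𝓝 (0 : X), -f' v ≤ (ε + δ) * ‖v‖ := by
    have hadd : Tendsto (fun v => y + v) (𝓝 0) (𝓝 y) := by
      simpa using (continuous_const_add y).tendsto 0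
    filter_upwards [hadd.eventually h, (hasFDerivAt_iff_isLittleO_nhds_zero.1 hf).def hδ]
      with v hv hlin
    rw [dist_self_add_right] at hv
    linarith [le_of_abs_le hlin]
  have hneg : Tendsto (fun v : X => -v) (𝓝 0) (𝓝 0) := by
    simpa using (continuous_neg (G := X)).tendsto 0
  refine f'.opNorm_le_of_nhds_zero (by positivity) ?_
  filter_upwards [hbound, hneg.eventually hbound] with v hv hv'
  rw [map_neg, norm_neg, neg_neg] at hv'
  exact abs_le.2 ⟨by linarith, hv'⟩

lemma exists_norm_fderiv_le_of_bddBelow [CompleteSpace X] {E : X → ℝ} {E' : X → X →L[ℝ] ℝ}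
    (hE : ∀ x, HasFDerivAt E (E' x) x) {s : Set X} (hs : IsClosed s) (hbdd : BddBelow (E '' s))
    {ε : ℝ} (hε : 0 < ε) {x : X} (hx : x ∈ s) :
    ∃ y ∈ s, E y + ε * dist x y ≤ E x ∧ (y ∈ interior s → ‖E' y‖ ≤ ε) := by
  have := hs.completeSpace_coe
  have hEc : Continuous E := continuous_iff_continuousAt.2 fun x => (hE x).continuousAt
  obtain ⟨⟨y, hy⟩, hyx, hmin⟩ := ekeland_variational_principle (f := s.domRestrict E)
    hEc.continuousOn.domRestrict.lowerSemicontinuous (by rwa [Set.range_domRestrict]) hε ⟨x, hx⟩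
  refine ⟨y, hy, hyx, fun hint => ?_⟩
  refine norm_le_of_hasFDerivAt_of_eventually_le_add_mul_dist (hE y) hε.le ?_
  filter_upwards [mem_interior_iff_mem_nhds.1 hint] with z hz using hmin ⟨z, hz⟩

end AlmostCritical

section IsupComp

variable {X T : Type*} [TopologicalSpace X] [TopologicalSpace T] [CompactSpace T] {E : X → ℝ}

lemma continuous_iSup_comp [R1Space X] (hE : Continuous E) :
    Continuous fun g : C(T, X) => ⨆ t, E (g t) := by
  simp only [← Set.image_univ, ← sSup_range]
  exact isCompact_univ.continuous_sSup (f := fun (g : C(T, X)) t => E (g t))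
    (hE.comp continuous_eval)

lemma le_iSup_comp (hE : Continuous E) (g : C(T, X)) (t : T) : E (g t) ≤ ⨆ t, E (g t) :=
  le_ciSup (isCompact_range (hE.comp g.continuous)).bddAbove t

lemma exists_eq_iSup_comp [Nonempty T] (hE : Continuous E) (g : C(T, X)) :
    ∃ t, E (g t) = ⨆ t, E (g t) :=
  (isCompact_range (hE.comp g.continuous)).sSup_mem (Set.range_nonempty _)

end IsupComp

section Minimax

variable {X : Type*} [NormedAddCommGroup X] [NormedSpace ℝ X] {T : Type*} [TopologicalSpace T]

lemma exists_continuousMap_forall_apply_lt [NormalSpace T] [ParacompactSpace T]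
    {l : T → X →L[ℝ] ℝ} (hl : Continuous l) {A B : Set T} (hA : IsClosed A) (hB : IsClosed B)
    (hAB : Disjoint A B) {ε : ℝ} (hε : ∀ t ∈ B, ε < ‖l t‖) :
    ∃ v : C(T, X), (∀ t ∈ A, v t = 0) ∧ (∀ t, ‖v t‖ ≤ 1) ∧ ∀ t ∈ B, l t (v t) < -ε := by
  let S : T → Set X := fun t =>
    (⋂ _ : t ∈ A, {0}) ∩ Metric.closedBall 0 1 ∩ ⋂ _ : t ∈ B, {v | l t v < -ε}
  have hmem : ∀ {t v}, v ∈ S t ↔ (t ∈ A → v = 0) ∧ ‖v‖ ≤ 1 ∧ (t ∈ B → l t v < -ε) := by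
    simp [S, and_assoc]
  have hconvex : ∀ t, Convex ℝ (S t) := fun t =>
    ((convex_iInter fun _ => convex_singleton 0).inter (convex_closedBall 0 1)).inter
      (convex_iInter fun _ => convex_halfSpace_lt (l t).isLinear _)
  have hlocal : ∀ t, ∃ c, ∀ᶠ s in 𝓝 t, c ∈ S s := fun t => by
    by_cases ht : t ∈ B
    · obtain ⟨w, hw, hlw⟩ : ∃ w : X, ‖w‖ < 1 ∧ l t w < -ε := by
        obtain ⟨w, hw, hlw⟩ := (l t).exists_lt_apply_of_lt_opNorm (hε t ht)
        rcases lt_abs.1 hlw with h | h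
        · exact ⟨-w, by rwa [norm_neg], by rwa [map_neg, neg_lt_neg_iff]⟩
        · exact ⟨w, hw, lt_neg_of_lt_neg h⟩
      have hlt : ∀ᶠ s in 𝓝 t, l s w < -ε :=
        (hl.clm_apply continuous_const).continuousAt.eventually_lt continuousAt_const hlw
      refine ⟨w, ?_⟩
      filter_upwards [hlt, hA.isOpen_compl.mem_nhds (hAB.notMem_of_mem_right ht)] with s hs hsA
      exact hmem.2 ⟨fun h => absurd h hsA, hw.le, fun _ => hs⟩
    · refine ⟨0, ?_⟩
      filter_upwards [hB.isOpen_compl.mem_nhds ht] with s hs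
      exact hmem.2 ⟨fun _ => rfl, by simp, fun h => absurd h hs⟩
  obtain ⟨v, hv⟩ := exists_continuous_forall_mem_convex_of_local_const hconvex hlocal
  exact ⟨v, fun t => (hmem.1 (hv t)).1, fun t => (hmem.1 (hv t)).2.1, fun t => (hmem.1 (hv t)).2.2⟩

variable {E : X → ℝ} {E' : X → X →L[ℝ] ℝ}

lemma eventually_nhds_lt_sub_mul (hE : ∀ x, HasFDerivAt E (E' x) x) (hE' : Continuous E')
    (g v : C(T, X)) {c ε : ℝ} (hle : ∀ t, E (g t) ≤ c) {t : T}
    (hdesc : E (g t) = c → E' (g t) (v t) < -ε) :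
    ∀ᶠ z : ℝ × T in 𝓝 (0, t), 0 < z.1 → E (g z.2 + z.1 • v z.2) < c - ε * z.1 := by
  have hEc : Continuous E := continuous_iff_continuousAt.2 fun x => (hE x).continuousAt
  rcases (hle t).lt_or_eq with hlt | heq
  · have : ∀ᶠ z : ℝ × T in 𝓝 (0, t), E (g z.2 + z.1 • v z.2) < c - ε * z.1 :=
      ContinuousAt.eventually_lt (by fun_prop) (by fun_prop) (by simpa using hlt)
    exact this.mono fun z hz _ => hz
  · have hderiv : ∀ᶠ z : ℝ × T in 𝓝 (0, t), E' (g z.2 + z.1 • v z.2) (v z.2) < -ε :=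
      ContinuousAt.eventually_lt (by fun_prop) continuousAt_const (by simpa using hdesc heq)
    rw [nhds_prod_eq, eventually_prod_iff] at hderiv ⊢
    obtain ⟨P, hP, Q, hQ, hPQ⟩ := hderiv
    obtain ⟨δ, hδ, hball⟩ := Metric.eventually_nhds_iff_ball.1 hP
    refine ⟨_, Metric.ball_mem_nhds 0 hδ, Q, hQ, fun {s} hs {t'} ht' hs0 => ?_⟩
    have hline : ∀ r : ℝ, HasDerivAt (fun r => E (g t' + r • v t'))
        (E' (g t' + r • v t') (v t')) r := fun r =>
      (hE _).comp_hasDerivAt r <| by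
        simpa using ((hasDerivAt_id r).smul_const (v t')).const_add (g t')
    obtain ⟨r, hr, hslope⟩ := exists_hasDerivAt_eq_slope _ _ hs0
      (HasDerivAt.continuousOn fun r _ => hline r) fun r _ => hline r
    have hrδ : r ∈ Metric.ball (0 : ℝ) δ := by
      rw [Metric.mem_ball, Real.dist_0_eq_abs, abs_of_pos hr.1]
      exact (hr.2.trans_le (le_abs_self s)).trans (Real.dist_0_eq_abs s ▸ hs)
    have hlt := hPQ (hball r hrδ) ht'
    rw [hslope, sub_zero, div_lt_iff₀ hs0, zero_smul, add_zero] at hlt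
    linarith [hle t']

variable [CompactSpace T]

lemma eventually_forall_lt_sub_mul (hE : ∀ x, HasFDerivAt E (E' x) x) (hE' : Continuous E')
    (g v : C(T, X)) {c ε : ℝ} (hle : ∀ t, E (g t) ≤ c)
    (hdesc : ∀ t, E (g t) = c → E' (g t) (v t) < -ε) :
    ∀ᶠ s in 𝓝[>] (0 : ℝ), ∀ t, E (g t + s • v t) < c - ε * s := by
  have h : ∀ᶠ s in 𝓝 (0 : ℝ), ∀ t ∈ Set.univ, 0 < s → E (g t + s • v t) < c - ε * s :=
    isCompact_univ.eventually_forall_of_forall_eventually fun t _ =>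
      eventually_nhds_lt_sub_mul hE hE' g v hle (hdesc t)
  exact eventually_nhdsWithin_iff.2 (h.mono fun s hs hs0 t => hs t (Set.mem_univ t) hs0)

lemma exists_norm_le_of_iSup_le_add_mul_dist [T2Space T] [Nonempty T]
    (hE : ∀ x, HasFDerivAt E (E' x) x) (hE' : Continuous E') {A : Set T} (hA : IsClosed A)
    {g : C(T, X)} (hbdry : ∀ t ∈ A, E (g t) < ⨆ t, E (g t)) {ε : ℝ} (hε : 0 ≤ ε)
    (hmin : ∀ h : C(T, X), Set.EqOn h g A → ⨆ t, E (g t) ≤ (⨆ t, E (h t)) + ε * dist g h) :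
    ∃ t, E (g t) = ⨆ t, E (g t) ∧ ‖E' (g t)‖ ≤ ε := by
  have hEc : Continuous E := continuous_iff_continuousAt.2 fun x => (hE x).continuousAt
  by_contra! hbig
  have hdisj : Disjoint A {t | E (g t) = ⨆ t, E (g t)} :=
    Set.disjoint_left.2 fun t htA => (hbdry t htA).ne
  obtain ⟨v, hvA, hv1, hdesc⟩ := exists_continuousMap_forall_apply_lt (hE'.comp g.continuous) hA
    (isClosed_eq (hEc.comp g.continuous) continuous_const) hdisj hbig
  obtain ⟨s, hs, hs0 : 0 < s⟩ :=
    ((eventually_forall_lt_sub_mul hE hE' g v (le_iSup_comp hEc g) hdesc).and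
      self_mem_nhdsWithin).exists
  have hdist : dist g (g + s • v) ≤ s := by
    rw [dist_self_add_right, norm_smul, Real.norm_of_nonneg hs0.le]
    exact mul_le_of_le_one_right hs0.le ((ContinuousMap.norm_le _ zero_le_one).2 hv1)
  obtain ⟨t, ht⟩ := exists_eq_iSup_comp hEc (g + s • v)
  have hle : ⨆ t, E (g t) ≤ E (g t + s • v t) + ε * s :=
    (hmin (g + s • v) fun t ht => by simp [hvA t ht]).trans
      (add_le_add ht.ge (mul_le_mul_of_nonneg_left hdist hε))
  linarith [hs t]

theorem minimax_principle [T2Space T] [CompleteSpace X]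
    (hE : ∀ x, HasFDerivAt E (E' x) x) (hE' : Continuous E') {A : Set T} (hA : IsClosed A)
    {g₀ : C(T, X)} {σ : ℝ} (hbdry : ∀ t ∈ A, E (g₀ t) < σ)
    (hlink : ∀ g : C(T, X), Set.EqOn g g₀ A → ∃ t, σ ≤ E (g t)) {ε : ℝ} (hε : 0 < ε) :
    ∃ x, σ ≤ E x ∧ (∃ t, E x ≤ E (g₀ t)) ∧ ‖E' x‖ ≤ ε := by
  have hEc : Continuous E := continuous_iff_continuousAt.2 fun x => (hE x).continuousAt
  have : Nonempty T := (hlink g₀ (Set.eqOn_refl _ _)).nonempty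
  let Γ : Set C(T, X) := {g | Set.EqOn g g₀ A}
  have hΓ : IsClosed Γ := by
    simp only [Γ, Set.EqOn, Set.ofPred_forall]
    exact isClosed_biInter fun t _ => isClosed_eq (continuous_eval_const t) continuous_const
  have := hΓ.completeSpace_coe
  have hσ : ∀ g ∈ Γ, σ ≤ ⨆ t, E (g t) := fun g hg =>
    let ⟨t, ht⟩ := hlink g hg
    ht.trans (le_iSup_comp hEc g t)
  obtain ⟨⟨g, hg⟩, hgg₀, hmin⟩ := ekeland_variational_principle (f := fun g : Γ => ⨆ t, E (g.1 t))
    ((continuous_iSup_comp hEc).comp continuous_subtype_val).lowerSemicontinuous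
    ⟨σ, Set.forall_mem_range.2 fun g => hσ g.1 g.2⟩ hε ⟨g₀, Set.eqOn_refl _ _⟩
  obtain ⟨t, ht, hεt⟩ := exists_norm_le_of_iSup_le_add_mul_dist hE hE' hA
    (fun t ht => by rw [hg ht]; exact (hbdry t ht).trans_le (hσ g hg)) hε.le
    fun h hh => hmin ⟨h, hh.trans hg⟩
  obtain ⟨s, hs⟩ := exists_eq_iSup_comp hEc g₀
  refine ⟨g t, ht ▸ hσ g hg, ⟨s, ?_⟩, hεt⟩
  rw [ht, hs]
  exact (le_add_of_nonneg_right (by positivity)).trans hgg₀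

end Minimax

section PalaisSmale

variable {X : Type*} [NormedAddCommGroup X] [NormedSpace ℝ X]

/-- The Palais–Smale compactness condition on a set `S`, for a functional with derivative `E'`.
Restrictions on the values of the functional along the sequence, which are usually part of the
condition, are expressed by the choice of `S`. -/
def PalaisSmaleOn (E' : X → X →L[ℝ] ℝ) (S : Set X) : Prop :=
  ∀ x : ℕ → X, (∀ n, x n ∈ S) → Tendsto (fun n => E' (x n)) atTop (𝓝 0) →
    ∃ u, ∃ φ : ℕ → ℕ, StrictMono φ ∧ Tendsto (x ∘ φ) atTop (𝓝 u)

variable {E : X → ℝ} {E' : X → X →L[ℝ] ℝ}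

lemma PalaisSmaleOn.mono {S T : Set X} (hT : PalaisSmaleOn E' T) (h : S ⊆ T) :
    PalaisSmaleOn E' S :=
  fun x hx => hT x fun n => h (hx n)

lemma PalaisSmaleOn.exists_eq_zero {S : Set X} (hPS : PalaisSmaleOn E' S) (hS : IsClosed S)
    (hE' : Continuous E') (h : ∀ ε > 0, ∃ x ∈ S, ‖E' x‖ ≤ ε) : ∃ u ∈ S, E' u = 0 := by
  choose x hxS hx using fun n : ℕ => h (1 / ((n : ℝ) + 1)) Nat.one_div_pos_of_nat
  have hlim : Tendsto (fun n => E' (x n)) atTop (𝓝 0) :=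
    squeeze_zero_norm hx tendsto_one_div_add_atTop_nhds_zero_nat
  obtain ⟨u, φ, hφ, hu⟩ := hPS x hxS hlim
  exact ⟨u, hS.mem_of_tendsto hu (.of_forall fun n => hxS (φ n)),
    tendsto_nhds_unique ((hE'.tendsto u).comp hu) (hlim.comp hφ.tendsto_atTop)⟩

variable [CompleteSpace X]

lemma exists_critical_point_le (hE : ∀ x, HasFDerivAt E (E' x) x) (hE' : Continuous E')
    {s : Set X} (hs : IsClosed s) (hbdd : BddBelow (E '' s)) {x : X} (hx : x ∈ s)
    (hlt : ∀ y ∈ s, y ∉ interior s → E x < E y) (hPS : PalaisSmaleOn E' {y | E y ≤ E x}) :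
    ∃ u ∈ s, E u ≤ E x ∧ E' u = 0 := by
  have hEc : Continuous E := continuous_iff_continuousAt.2 fun x => (hE x).continuousAt
  obtain ⟨u, ⟨hus, hu⟩, hu0⟩ := (hPS.mono Set.inter_subset_right).exists_eq_zero
    (hs.inter (isClosed_le hEc continuous_const)) hE' fun ε hε => by
      obtain ⟨y, hys, hyx, hy⟩ := exists_norm_fderiv_le_of_bddBelow hE hs hbdd hε hx
      have hle : E y ≤ E x := (le_add_of_nonneg_right (by positivity)).trans hyx
      exact ⟨y, ⟨hys, hle⟩, hy (not_imp_comm.1 (hlt y hys) hle.not_gt)⟩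
  exact ⟨u, hus, hu, hu0⟩

theorem mountain_pass (hE : ∀ x, HasFDerivAt E (E' x) x) (hE' : Continuous E')
    (hPS : ∀ C, PalaisSmaleOn E' {x | E x ≤ C}) {p q : X} {ρ σ : ℝ} (hρ : 0 ≤ ρ)
    (hpq : ρ ≤ dist q p) (hp : E p < σ) (hq : E q < σ) (hsphere : ∀ x, dist x p = ρ → σ ≤ E x) :
    ∃ u, σ ≤ E u ∧ (∃ y ∈ segment ℝ p q, E u ≤ E y) ∧ E' u = 0 := by
  have hEc : Continuous E := continuous_iff_continuousAt.2 fun x => (hE x).continuousAt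
  let g₀ : C(unitInterval, X) := ⟨fun t => AffineMap.lineMap p q (t : ℝ), by fun_prop⟩
  have hbdry : ∀ t ∈ ({0, 1} : Set unitInterval), E (g₀ t) < σ := by
    rintro t (rfl | rfl) <;> simpa [g₀]
  have hlink : ∀ g : C(unitInterval, X), Set.EqOn g g₀ {0, 1} → ∃ t, σ ≤ E (g t) := by
    intro g hg
    obtain ⟨t, ht⟩ : ρ ∈ Set.range fun t => dist (g t) p :=
      mem_range_of_exists_le_of_exists_ge (by fun_prop)
        ⟨0, by simpa [hg (Set.mem_insert 0 {1}), g₀]⟩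
        ⟨1, by simpa [hg (Set.mem_insert_of_mem 0 rfl), g₀]⟩
    exact ⟨t, hsphere _ ht⟩
  obtain ⟨s, hs⟩ := exists_eq_iSup_comp hEc g₀
  obtain ⟨u, ⟨huσ, hus⟩, hu0⟩ := ((hPS (E (g₀ s))).mono Set.inter_subset_right).exists_eq_zero
    ((isClosed_le continuous_const hEc).inter (isClosed_le hEc continuous_const)) hE'
    fun ε hε => by
      obtain ⟨x, hσ, ⟨t, ht⟩, hx⟩ := minimax_principle hE hE'
        (Set.toFinite {0, 1}).isClosed hbdry hlink hε
      exact ⟨x, ⟨hσ, ht.trans ((le_iSup_comp hEc g₀ t).trans hs.ge)⟩, hx⟩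
  exact ⟨u, huσ, ⟨g₀ s, segment_eq_image_lineMap ℝ p q ▸ Set.mem_image_of_mem _ s.2, hus⟩, hu0⟩

theorem exists_three_critical_points (hE : ∀ x, HasFDerivAt E (E' x) x) (hE' : Continuous E')
    (hPS : ∀ C, PalaisSmaleOn E' {x | E x ≤ C}) (hbdd : BddBelow (Set.range E)) {p q : X}
    {ρ m σ : ℝ} (hρ : 0 < ρ) (hball : ∀ x, dist x p ≤ ρ → m ≤ E x) (hq : E q < m)
    (hsphere : ∀ x, dist x p = ρ → σ ≤ E x) (hp : E p < σ) :
    ∃ u₁ u₂ u₃ : X, u₁ ≠ u₂ ∧ u₁ ≠ u₃ ∧ u₂ ≠ u₃ ∧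
      ∀ u ∈ ({u₁, u₂, u₃} : Set X), E' u = 0 ∧ ∃ y ∈ segment ℝ p q, E u ≤ E y := by
  have hmp : m ≤ E p := hball p (by simpa using hρ.le)
  have hpq : ρ < dist q p := lt_of_not_ge fun h => (hball q h).not_gt hq
  obtain ⟨u₁, hu₁, hu₁p, hu₁0⟩ := exists_critical_point_le hE hE' Metric.isClosed_closedBall
    ⟨m, Set.forall_mem_image.2 hball⟩ (Metric.mem_closedBall_self hρ.le)
    (fun y hy hyint => hp.trans_le <| hsphere y <| (Metric.mem_closedBall.1 hy).antisymm <| by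
      simpa [interior_closedBall p hρ.ne'] using hyint) (hPS _)
  obtain ⟨u₂, -, hu₂q, hu₂0⟩ := exists_critical_point_le hE hE' isClosed_univ
    (Set.image_univ ▸ hbdd) (Set.mem_univ q) (by simp) (hPS _)
  obtain ⟨u₃, hu₃, hu₃seg, hu₃0⟩ := mountain_pass hE hE' hPS hρ.le hpq.le hp
    (hq.trans (hmp.trans_lt hp)) hsphere
  have hmu₁ : m ≤ E u₁ := hball u₁ hu₁
  refine ⟨u₁, u₂, u₃, ?_, ?_, ?_, ?_⟩
  · rintro rfl; linarith
  · rintro rfl; linarith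
  · rintro rfl; linarith
  · rintro u (rfl | rfl | rfl)
    · exact ⟨hu₁0, p, left_mem_segment ℝ p q, hu₁p⟩
    · exact ⟨hu₂0, q, right_mem_segment ℝ p q, hu₂q⟩
    · exact ⟨hu₃0, hu₃seg⟩

end PalaisSmale

section CompactMap

/-- A compact nonlinear map: it sends bounded sets to relatively compact sets. For nonlinear maps
this is stronger than Mathlib's `IsCompactOperator`, which only concerns some neighbourhood of
`0`. -/
def IsCompactMap {X Y : Type*} [Bornology X] [TopologicalSpace Y] (T : X → Y) : Prop :=
  ∀ s, IsBounded s → IsCompact (closure (T '' s))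

namespace IsCompactMap

variable {X Y Z : Type*} [Bornology X] [TopologicalSpace Y] [TopologicalSpace Z]

lemma prodMk [R1Space Y] [R1Space Z] {S : X → Y} {T : X → Z} (hS : IsCompactMap S)
    (hT : IsCompactMap T) : IsCompactMap fun x => (S x, T x) := fun s hs =>
  ((hS s hs).prod (hT s hs)).closure_of_subset <| Set.image_subset_iff.2 fun _ hx =>
    ⟨subset_closure (Set.mem_image_of_mem S hx), subset_closure (Set.mem_image_of_mem T hx)⟩

lemma continuous_comp [R1Space Z] {T : X → Y} (hT : IsCompactMap T) {f : Y → Z}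
    (hf : Continuous f) : IsCompactMap fun x => f (T x) := fun s hs =>
  ((hT s hs).image hf).closure_of_subset <| Set.image_subset_iff.2 fun _ hx =>
    Set.mem_image_of_mem f (subset_closure (Set.mem_image_of_mem T hx))

lemma isBounded_image {Y : Type*} [PseudoMetricSpace Y] {T : X → Y} (hT : IsCompactMap T)
    {s : Set X} (hs : IsBounded s) : IsBounded (T '' s) :=
  (hT s hs).isBounded.subset subset_closure

end IsCompactMap

variable {X F : Type*} [NormedAddCommGroup X] [NormedSpace ℝ X] [NormedAddCommGroup F]
  [NormedSpace ℝ F] {f : X → F} {f' : X → X →L[ℝ] F}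

lemma isBounded_image_of_isBounded_image_fderiv (hf : ∀ x, HasFDerivAt f (f' x) x)
    (hf' : ∀ s, IsBounded s → IsBounded (f' '' s)) {s : Set X} (hs : IsBounded s) :
    IsBounded (f '' s) := by
  obtain ⟨R, hR⟩ := hs.subset_closedBall 0
  obtain ⟨L, hL⟩ := (hf' _ (Metric.isBounded_closedBall (x := (0 : X)) (r := R))).exists_norm_le
  have hlip : LipschitzOnWith L.toNNReal f (Metric.closedBall 0 R) :=
    (convex_closedBall 0 R).lipschitzOnWith_of_nnnorm_hasFDerivWithin_le
      (fun x _ => (hf x).hasFDerivWithinAt) fun x hx =>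
        NNReal.le_toNNReal_of_coe_le (hL _ (Set.mem_image_of_mem f' hx))
  refine Metric.isBounded_iff.2 ⟨L.toNNReal * Metric.diam s, ?_⟩
  rintro _ ⟨x, hx, rfl⟩ _ ⟨y, hy, rfl⟩
  refine (hlip.dist_le_mul x (hR hx) y (hR hy)).trans ?_
  gcongr
  exact Metric.dist_le_diam_of_mem hs hx hy

lemma IsCompactMap.of_hasFDerivAt [ProperSpace F] (hf : ∀ x, HasFDerivAt f (f' x) x)
    (hf' : IsCompactMap f') : IsCompactMap f := fun _ hs =>
  (isBounded_image_of_isBounded_image_fderiv hf (fun _ => hf'.isBounded_image) hs).isCompact_closure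

lemma palaisSmaleOn_sub {Φ' K : X → X →L[ℝ] ℝ} {G : (X →L[ℝ] ℝ) → X} (hG : Continuous G)
    (hGΦ' : Function.LeftInverse G Φ') {S : Set X} (hK : IsCompact (closure (K '' S))) :
    PalaisSmaleOn (fun x => Φ' x - K x) S := by
  intro x hx hlim
  obtain ⟨k, -, φ, hφ, hk⟩ :=
    hK.tendsto_subseq fun n => subset_closure (Set.mem_image_of_mem K (hx n))
  have hΦ' : Tendsto (fun n => Φ' (x (φ n))) atTop (𝓝 k) := by
    simpa using (hlim.comp hφ.tendsto_atTop).add hk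
  refine ⟨G k, φ, hφ, ?_⟩
  simpa [Function.comp_def, hGΦ' _] using (hG.tendsto k).comp hΦ'

end CompactMap

section Truncation

lemma exists_bounded_contDiff_eqOn_id (M : ℝ) :
    ∃ h : ℝ → ℝ, ContDiff ℝ 1 h ∧ (∃ B, ∀ t, |h t| ≤ B) ∧ ∀ t, |t| ≤ M → deriv h t = 1 := by
  let φ : ContDiffBump (0 : ℝ) := ⟨|M| + 1, |M| + 2, by positivity, by linarith⟩
  have hφ : ContDiff ℝ 1 fun t => φ t * t := φ.contDiff.mul contDiff_id
  refine ⟨_, hφ, φ.hasCompactSupport.mul_right.exists_bound_of_continuous hφ.continuous,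
    fun t ht => ?_⟩
  have hball : t ∈ Metric.ball 0 φ.rIn := by
    rw [mem_ball_zero_iff, Real.norm_eq_abs]
    exact (ht.trans (le_abs_self M)).trans_lt (lt_add_one _)
  have hid : (fun t => φ t * t) =ᶠ[𝓝 t] id := by
    filter_upwards [φ.eventuallyEq_one_of_mem_ball hball] with s hs
    simp [hs]
  rw [hid.deriv_eq, deriv_id]

lemma exists_bounded_truncation {X : Type*} [NormedAddCommGroup X] [NormedSpace ℝ X] {Ψ : X → ℝ}
    {Ψ' : X → X →L[ℝ] ℝ} (hΨ : ∀ x, HasFDerivAt Ψ (Ψ' x) x) (hΨ' : Continuous Ψ')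
    (hΨ'c : IsCompactMap Ψ') {s : Set X} (hs : IsBounded s) :
    ∃ (Θ : X → ℝ) (Θ' : X → X →L[ℝ] ℝ), (∀ x, HasFDerivAt Θ (Θ' x) x) ∧ Continuous Θ' ∧
      IsCompactMap Θ' ∧ (∃ B, ∀ x, |Θ x| ≤ B) ∧ Set.EqOn Θ' Ψ' s := by
  have hΨc : Continuous Ψ := continuous_iff_continuousAt.2 fun x => (hΨ x).continuousAt
  have hΨcpt : IsCompactMap Ψ := .of_hasFDerivAt hΨ hΨ'c
  obtain ⟨M, hM⟩ := (hΨcpt.isBounded_image hs).exists_norm_le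
  obtain ⟨h, hh, ⟨B, hB⟩, hderiv⟩ := exists_bounded_contDiff_eqOn_id M
  have := hh.continuous_deriv_one
  refine ⟨fun x => h (Ψ x), fun x => deriv h (Ψ x) • Ψ' x, fun x => ?_, by fun_prop,
    (hΨcpt.prodMk hΨ'c).continuous_comp (f := fun w => deriv h w.1 • w.2) (by fun_prop),
    ⟨B, fun x => hB _⟩, fun x hx => ?_⟩
  · exact (hh.differentiable one_ne_zero (Ψ x)).hasDerivAt.comp_hasFDerivAt x (hΨ x)
  · simp only [hderiv _ (hM _ (Set.mem_image_of_mem Ψ hx)), one_smul]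

end Truncation

section ContinuousLeftInverse

variable {X : Type*} [NormedAddCommGroup X] [NormedSpace ℝ X] {Φ : X → ℝ} {Φ' : X → X →L[ℝ] ℝ}
  {G : (X →L[ℝ] ℝ) → X} {x₀ : X}

lemma exists_dist_lt_of_norm_le (hG : Continuous G) (hGΦ' : Function.LeftInverse G Φ')
    (h₀ : Φ' x₀ = 0) {κ : ℝ} (hκ : 0 < κ) : ∃ η > 0, ∀ y, ‖Φ' y‖ ≤ η → dist y x₀ < κ := by
  have hG₀ : G 0 = x₀ := h₀ ▸ hGΦ' x₀
  obtain ⟨η, hη, hball⟩ := Metric.nhds_basis_closedBall.mem_iff.1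
    (hG.tendsto 0 (Metric.ball_mem_nhds _ hκ))
  exact ⟨η, hη, fun y hy => by simpa [hGΦ' y, hG₀] using hball (mem_closedBall_zero_iff.2 hy)⟩

variable [CompleteSpace X]

lemma mul_min_le_sub_of_forall_mem_closedBall (hΦ : ∀ x, HasFDerivAt Φ (Φ' x) x) {m κ η ρ : ℝ}
    (hm : ∀ x ∈ Metric.closedBall x₀ ρ, m ≤ Φ x) (hη : 0 < η)
    (hclose : ∀ y, ‖Φ' y‖ ≤ η → dist y x₀ < κ) {x : X} (hx : x ∈ Metric.closedBall x₀ ρ) :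
    η * min (dist x x₀ - κ) (ρ - dist x x₀) ≤ Φ x - m := by
  obtain ⟨y, hy, hyx, hint⟩ := exists_norm_fderiv_le_of_bddBelow hΦ Metric.isClosed_closedBall
    ⟨m, Set.forall_mem_image.2 hm⟩ hη hx
  have hdist : min (dist x x₀ - κ) (ρ - dist x x₀) ≤ dist x y := by
    by_cases hyρ : dist y x₀ < ρ
    · have hyκ := hclose y (hint (Metric.ball_subset_interior_closedBall hyρ))
      exact min_le_of_left_le (by linarith [dist_triangle x y x₀])
    · exact min_le_of_right_le (by linarith [dist_triangle_left y x₀ x])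
  linarith [mul_le_mul_of_nonneg_left hdist hη.le, hm y hy]

lemma le_of_isLocalMin_of_leftInverse_fderiv (hmin : IsLocalMin Φ x₀)
    (hΦ : ∀ x, HasFDerivAt Φ (Φ' x) x) (hΦ' : Continuous Φ') (hG : Continuous G)
    (hGΦ' : Function.LeftInverse G Φ') (x : X) : Φ x₀ ≤ Φ x := by
  by_contra! hx
  have h₀ : Φ' x₀ = 0 := hmin.hasFDerivAt_eq_zero (hΦ x₀)
  obtain ⟨ρ, hρ, hball : ∀ y ∈ Metric.closedBall x₀ ρ, Φ x₀ ≤ Φ y⟩ :=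
    Metric.nhds_basis_closedBall.eventually_iff.1 hmin
  obtain ⟨η, hη, hclose⟩ := exists_dist_lt_of_norm_le hG hGΦ' h₀ (κ := ρ / 4) (by positivity)
  have hsphere : ∀ y, dist y x₀ = ρ / 2 → Φ x₀ + η * (ρ / 4) ≤ Φ y := fun y hy => by
    have hle := mul_min_le_sub_of_forall_mem_closedBall hΦ hball hη hclose (x := y)
      (Metric.mem_closedBall.2 (by linarith))
    rw [hy, min_eq_left (by linarith), show ρ / 2 - ρ / 4 = ρ / 4 by ring] at hle
    linarith
  have hPS : PalaisSmaleOn Φ' Set.univ := by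
    simpa using palaisSmaleOn_sub hG hGΦ' (K := fun _ => 0) (S := Set.univ) (by simp)
  have hpos : 0 < η * (ρ / 4) := by positivity
  obtain ⟨u, hu, -, hu0⟩ := mountain_pass hΦ hΦ' (fun C => hPS.mono (Set.subset_univ _))
    (by positivity) (le_of_not_gt fun h => (hball x (h.le.trans (half_le_self hρ.le))).not_gt hx)
    (lt_add_of_pos_right _ hpos) (hx.trans (lt_add_of_pos_right _ hpos)) hsphere
  obtain rfl : u = x₀ := hGΦ'.injective (hu0.trans h₀.symm)
  linarith

lemma exists_mul_dist_sub_le_sub_of_isLocalMin (hmin : IsLocalMin Φ x₀)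
    (hΦ : ∀ x, HasFDerivAt Φ (Φ' x) x) (hΦ' : Continuous Φ') (hG : Continuous G)
    (hGΦ' : Function.LeftInverse G Φ') {κ : ℝ} (hκ : 0 < κ) :
    ∃ η > 0, ∀ x, η * (dist x x₀ - κ) ≤ Φ x - Φ x₀ := by
  obtain ⟨η, hη, hclose⟩ :=
    exists_dist_lt_of_norm_le hG hGΦ' (hmin.hasFDerivAt_eq_zero (hΦ x₀)) hκ
  refine ⟨η, hη, fun x => ?_⟩
  have hle := mul_min_le_sub_of_forall_mem_closedBall hΦ
    (fun y _ => le_of_isLocalMin_of_leftInverse_fderiv hmin hΦ hΦ' hG hGΦ' y) hη hclose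
    (ρ := 2 * dist x x₀) (x := x) (le_mul_of_one_le_left dist_nonneg one_le_two)
  rwa [min_eq_left (by linarith)] at hle

lemma tendsto_cobounded_atTop_of_isLocalMin_of_leftInverse_fderiv (hmin : IsLocalMin Φ x₀)
    (hΦ : ∀ x, HasFDerivAt Φ (Φ' x) x) (hΦ' : Continuous Φ') (hG : Continuous G)
    (hGΦ' : Function.LeftInverse G Φ') : Tendsto Φ (cobounded X) atTop := by
  obtain ⟨η, hη, hgrowth⟩ := exists_mul_dist_sub_le_sub_of_isLocalMin hmin hΦ hΦ' hG hGΦ' one_pos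
  have hlower : Tendsto (fun x => η * (dist x x₀ - 1) + Φ x₀) (cobounded X) atTop :=
    tendsto_atTop_add_const_right _ _ <| (tendsto_atTop_add_const_right _ _
      (Metric.tendsto_dist_right_cobounded_atTop x₀)).const_mul_atTop hη
  exact tendsto_atTop_mono (fun x => by linarith [hgrowth x]) hlower

end ContinuousLeftInverse

section Perturbation

variable {X : Type*} [NormedAddCommGroup X] [NormedSpace ℝ X] [CompleteSpace X] {p q : X}
  {ρ σ : ℝ}

theorem eventually_exists_three_critical_points_sub_mul {I Θ : X → ℝ} {I' Θ' : X → X →L[ℝ] ℝ}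
    (hI : ∀ x, HasFDerivAt I (I' x) x) (hI' : Continuous I')
    (hΘ : ∀ x, HasFDerivAt Θ (Θ' x) x) (hΘ' : Continuous Θ') {B : ℝ} (hB : ∀ x, |Θ x| ≤ B)
    (hPS : ∀ μ C : ℝ, PalaisSmaleOn (fun x => I' x - μ • Θ' x) {x | I x ≤ C})
    (hbdd : BddBelow (Set.range I)) (hρ : 0 < ρ) (hball : ∀ x, dist x p ≤ ρ → I p ≤ I x)
    (hq : I q < I p) (hsphere : ∀ x, dist x p = ρ → σ ≤ I x) (hp : I p < σ) :
    ∀ᶠ μ in 𝓝 (0 : ℝ), ∃ u₁ u₂ u₃ : X, u₁ ≠ u₂ ∧ u₁ ≠ u₃ ∧ u₂ ≠ u₃ ∧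
      ∀ u ∈ ({u₁, u₂, u₃} : Set X),
        I' u = μ • Θ' u ∧ ∃ y ∈ segment ℝ p q, I u ≤ I y + 1 := by
  have hsmall : Tendsto (fun μ : ℝ => 2 * (|μ| * B)) (𝓝 0) (𝓝 0) :=
    Continuous.tendsto' (by fun_prop) _ _ (by simp)
  filter_upwards [hsmall.eventually_le_const one_pos, hsmall.eventually_lt_const (sub_pos.2 hq),
    hsmall.eventually_lt_const (sub_pos.2 hp)] with μ hμ₁ hμq hμp
  set τ := |μ| * B
  have hτ : ∀ x, |μ * Θ x| ≤ τ := fun x => by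
    rw [abs_mul]
    exact mul_le_mul_of_nonneg_left (hB x) (abs_nonneg μ)
  have hle : ∀ x, μ * Θ x ≤ τ := fun x => (abs_le.1 (hτ x)).2
  have hge : ∀ x, -τ ≤ μ * Θ x := fun x => (abs_le.1 (hτ x)).1
  obtain ⟨m, hm⟩ := hbdd
  obtain ⟨u₁, u₂, u₃, h₁₂, h₁₃, h₂₃, hu⟩ := exists_three_critical_points
    (E := fun x => I x - μ * Θ x) (p := p) (q := q) (m := I p - τ) (σ := σ - τ)
    (fun x => (hI x).sub ((hΘ x).const_mul μ)) (hI'.sub (hΘ'.const_smul μ))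
    (fun C => (hPS μ (C + τ)).mono fun x (hx : I x - μ * Θ x ≤ C) =>
      (by linarith [hle x] : I x ≤ C + τ))
    ⟨m - τ, Set.forall_mem_range.2 fun x => sub_le_sub (hm ⟨x, rfl⟩) (hle x)⟩ hρ
    (fun x hx => sub_le_sub (hball x hx) (hle x)) (by linarith [hge q])
    (fun x hx => sub_le_sub (hsphere x hx) (hle x)) (by linarith [hge p])
  refine ⟨u₁, u₂, u₃, h₁₂, h₁₃, h₂₃, fun u hu' => ?_⟩
  obtain ⟨hu0, y, hy, huy⟩ := hu u hu'
  exact ⟨sub_eq_zero.1 hu0, y, hy, by linarith [hle u, hge y]⟩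

lemma bddBelow_range_sub_of_isBounded_sublevel {X : Type*} [Bornology X] {Φ J : X → ℝ}
    (hΦ : BddBelow (Set.range Φ)) (hJ : ∀ s, IsBounded s → IsBounded (J '' s)) {C : ℝ}
    (hC : IsBounded {x | Φ x - J x ≤ C}) : BddBelow (Set.range fun x => Φ x - J x) := by
  obtain ⟨m, hm⟩ := hΦ
  obtain ⟨M, hM⟩ := (hJ _ hC).bddAbove
  refine ⟨min C (m - M), Set.forall_mem_range.2 fun x => ?_⟩
  rcases le_total (Φ x - J x) C with hx | hx
  · exact min_le_of_right_le (sub_le_sub (hm ⟨x, rfl⟩) (hM (Set.mem_image_of_mem J hx)))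
  · exact min_le_of_left_le hx

theorem eventually_exists_three_solutions {Φ J Ψ : X → ℝ} {Φ' J' Ψ' : X → X →L[ℝ] ℝ}
    {G : (X →L[ℝ] ℝ) → X} {γ : ℝ}
    (hΦ : ∀ x, HasFDerivAt Φ (Φ' x) x) (hΦ' : Continuous Φ') (hbdd : BddBelow (Set.range Φ))
    (hG : Continuous G) (hGΦ' : Function.LeftInverse G Φ')
    (hJ : ∀ x, HasFDerivAt J (J' x) x) (hJ' : Continuous J') (hJ'c : IsCompactMap J')
    (hΨ : ∀ x, HasFDerivAt Ψ (Ψ' x) x) (hΨ' : Continuous Ψ') (hΨ'c : IsCompactMap Ψ')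
    (hsub : ∀ C, IsBounded {x | Φ x - J x ≤ C}) (hρ : 0 < ρ)
    (hball : ∀ x, dist x p ≤ ρ → Φ p - J p ≤ Φ x - J x) (hq : Φ q - J q < Φ p - J p)
    (hsphere : ∀ x, dist x p = ρ → σ ≤ Φ x - J x) (hp : Φ p - J p < σ)
    (hγ : ∀ u, ∀ y ∈ segment ℝ p q, Φ u - J u ≤ Φ y - J y + 1 → ‖u‖ ≤ γ) :
    ∀ᶠ μ in 𝓝 (0 : ℝ), ∃ u₁ u₂ u₃ : X, u₁ ≠ u₂ ∧ u₁ ≠ u₃ ∧ u₂ ≠ u₃ ∧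
      ∀ u ∈ ({u₁, u₂, u₃} : Set X), Φ' u = J' u + μ • Ψ' u ∧ ‖u‖ ≤ γ := by
  obtain ⟨Θ, Θ', hΘ, hΘ', hΘ'c, ⟨B, hB⟩, hΘΨ⟩ := exists_bounded_truncation hΨ hΨ' hΨ'c
    (Metric.isBounded_closedBall (x := (0 : X)) (r := γ))
  have hPS : ∀ μ C : ℝ, PalaisSmaleOn (fun x => Φ' x - J' x - μ • Θ' x) {x | Φ x - J x ≤ C} :=
    fun μ C => by
      have hK : IsCompactMap fun x => J' x + μ • Θ' x :=
        (hJ'c.prodMk hΘ'c).continuous_comp (f := fun w => w.1 + μ • w.2) (by fun_prop)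
      simpa only [sub_sub] using palaisSmaleOn_sub hG hGΦ' (hK _ (hsub C))
  filter_upwards [eventually_exists_three_critical_points_sub_mul (fun x => (hΦ x).sub (hJ x))
    (hΦ'.sub hJ') hΘ hΘ' hB hPS
    (bddBelow_range_sub_of_isBounded_sublevel hbdd
      (fun _ => (IsCompactMap.of_hasFDerivAt hJ hJ'c).isBounded_image) (hsub 0))
    hρ hball hq hsphere hp] with μ ⟨u₁, u₂, u₃, h₁₂, h₁₃, h₂₃, hu⟩
  refine ⟨u₁, u₂, u₃, h₁₂, h₁₃, h₂₃, fun u hu' => ?_⟩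
  obtain ⟨hueq, y, hy, huy⟩ := hu u hu'
  have huγ : ‖u‖ ≤ γ := hγ u y hy huy
  rw [hΘΨ (mem_closedBall_zero_iff.2 huγ)] at hueq
  exact ⟨sub_eq_iff_eq_add'.1 hueq, huγ⟩

end Perturbation

section SubMul

variable {φ j b c lam : ℝ}

lemma one_sub_mul_mul_le_sub_mul (hφ : 0 ≤ φ) (hc : 0 ≤ c) (hlam : lam ∈ Set.Icc 0 b)
    (hj : j ≤ c * φ) : (1 - b * c) * φ ≤ φ - lam * j := by
  have hle : lam * j ≤ b * (c * φ) :=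
    (mul_le_mul_of_nonneg_left hj hlam.1).trans
      (mul_le_mul_of_nonneg_right hlam.2 (mul_nonneg hc hφ))
  linarith

lemma sub_mul_neg_of_div_lt {a : ℝ} (ha : 0 < a) (hφ : 0 ≤ φ) (hj : φ / a < j)
    (hlam : a ≤ lam) : φ - lam * j < 0 := by
  have hj0 : 0 < j := (div_nonneg hφ ha.le).trans_lt hj
  linarith [(div_lt_iff₀' ha).1 hj, mul_le_mul_of_nonneg_right hlam hj0.le]

lemma isBounded_setOf_exists_sub_mul_le {X : Type*} [Bornology X] {Φ J : X → ℝ}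
    (hΦ : ∀ x, 0 ≤ Φ x) (hcoer : Tendsto Φ (cobounded X) atTop) (hc : 0 ≤ c) (hbc : b * c < 1)
    (hJ : ∀ᶠ x in cobounded X, J x ≤ c * Φ x) (C : ℝ) :
    IsBounded {x | ∃ lam ∈ Set.Icc 0 b, Φ x - lam * J x ≤ C} := by
  rw [isBounded_def]
  filter_upwards [hJ, (hcoer.const_mul_atTop (sub_pos.2 hbc)).eventually_gt_atTop C] with x hJx hCx
  rintro ⟨lam, hlam, hle⟩
  exact (hCx.trans_le (one_sub_mul_mul_le_sub_mul (hΦ x) hc hlam hJx)).not_ge hle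

lemma exists_norm_le_of_sub_mul_le_add_one {X : Type*} [SeminormedAddCommGroup X] {Φ J : X → ℝ}
    (hΦc : Continuous Φ) (hJc : Continuous J) {k : Set X} (hk : IsCompact k) {a : ℝ}
    (hbdd : ∀ C, IsBounded {x | ∃ lam ∈ Set.Icc a b, Φ x - lam * J x ≤ C}) :
    ∃ γ > 0, ∀ lam ∈ Set.Icc a b, ∀ u, ∀ y ∈ k,
      Φ u - lam * J u ≤ Φ y - lam * J y + 1 → ‖u‖ ≤ γ := by
  obtain ⟨C, hC⟩ := ((isCompact_Icc (a := a) (b := b)).prod hk).bddAbove_image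
    (f := fun z => Φ z.2 - z.1 * J z.2) (by fun_prop)
  obtain ⟨γ, hγ, hbound⟩ := (hbdd (C + 1)).exists_pos_norm_le
  refine ⟨γ, hγ, fun lam hlam u y hy huy => hbound u ⟨lam, hlam, huy.trans ?_⟩⟩
  gcongr
  exact hC ⟨(lam, y), ⟨hlam, hy⟩, rfl⟩

end SubMul

section RicceriFunctional

variable {X : Type*} [NormedAddCommGroup X] [NormedSpace ℝ X] [CompleteSpace X] {Φ J : X → ℝ}
  {Φ' J' : X → X →L[ℝ] ℝ} {G : (X →L[ℝ] ℝ) → X} {x₀ q : X} {a b c : ℝ}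

lemma exists_sphere_lt_sub_mul (hΦ : ∀ x, HasFDerivAt Φ (Φ' x) x) (hΦ' : Continuous Φ')
    (hG : Continuous G) (hGΦ' : Function.LeftInverse G Φ') (hmin : IsLocalMin Φ x₀)
    (hΦ0 : Φ x₀ = 0) (hc : 0 ≤ c) (hbc : b * c < 1) (hJ : ∀ᶠ x in 𝓝 x₀, J x ≤ c * Φ x) :
    ∃ ρ > 0, ∃ σ > 0, ∀ lam ∈ Set.Icc 0 b,
      (∀ x, dist x x₀ ≤ ρ → 0 ≤ Φ x - lam * J x) ∧
      ∀ x, dist x x₀ = ρ → σ ≤ Φ x - lam * J x := by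
  have hΦ_nonneg : ∀ x, 0 ≤ Φ x :=
    hΦ0 ▸ le_of_isLocalMin_of_leftInverse_fderiv hmin hΦ hΦ' hG hGΦ'
  obtain ⟨ρ, hρ, hball⟩ := Metric.nhds_basis_closedBall.eventually_iff.1 hJ
  obtain ⟨η, hη, hgrowth⟩ :=
    exists_mul_dist_sub_le_sub_of_isLocalMin hmin hΦ hΦ' hG hGΦ' (half_pos hρ)
  have hbc' : 0 < 1 - b * c := sub_pos.2 hbc
  have hlower : ∀ lam ∈ Set.Icc 0 b, ∀ x, dist x x₀ ≤ ρ →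
      (1 - b * c) * Φ x ≤ Φ x - lam * J x := fun lam hlam x hx =>
    one_sub_mul_mul_le_sub_mul (hΦ_nonneg x) hc hlam (hball hx)
  refine ⟨ρ, hρ, (1 - b * c) * (η * (ρ / 2)), by positivity, fun lam hlam =>
    ⟨fun x hx => (mul_nonneg hbc'.le (hΦ_nonneg x)).trans (hlower lam hlam x hx), fun x hx => ?_⟩⟩
  have hΦx : η * (ρ / 2) ≤ Φ x := by simpa [hx, hΦ0, sub_half] using hgrowth x
  exact (mul_le_mul_of_nonneg_left hΦx hbc'.le).trans (hlower lam hlam x hx.le)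

theorem exists_radius_forall_eventually_exists_three_solutions
    (hΦ : ∀ x, HasFDerivAt Φ (Φ' x) x) (hΦ' : Continuous Φ')
    (hJ : ∀ x, HasFDerivAt J (J' x) x) (hJ' : Continuous J') (hJ'c : IsCompactMap J')
    (hG : Continuous G) (hGΦ' : Function.LeftInverse G Φ') (hmin : IsLocalMin Φ x₀)
    (hΦ0 : Φ x₀ = 0) (hJ0 : J x₀ = 0) (ha : 0 ≤ a) (hc : 0 ≤ c) (hbc : b * c < 1)
    (hfar : ∀ᶠ x in cobounded X, J x ≤ c * Φ x) (hnear : ∀ᶠ x in 𝓝 x₀, J x ≤ c * Φ x)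
    (hq : ∀ lam ∈ Set.Icc a b, Φ q - lam * J q < 0) :
    ∃ γ > 0, ∀ lam ∈ Set.Icc a b, ∀ (Ψ : X → ℝ) (Ψ' : X → X →L[ℝ] ℝ),
      (∀ x, HasFDerivAt Ψ (Ψ' x) x) → Continuous Ψ' → IsCompactMap Ψ' →
        ∀ᶠ μ in 𝓝 (0 : ℝ), ∃ u₁ u₂ u₃ : X, u₁ ≠ u₂ ∧ u₁ ≠ u₃ ∧ u₂ ≠ u₃ ∧
          ∀ u ∈ ({u₁, u₂, u₃} : Set X), Φ' u = lam • J' u + μ • Ψ' u ∧ ‖u‖ ≤ γ := by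
  have hΦ_nonneg : ∀ x, 0 ≤ Φ x :=
    hΦ0 ▸ le_of_isLocalMin_of_leftInverse_fderiv hmin hΦ hΦ' hG hGΦ'
  have hbounded : ∀ C, IsBounded {x | ∃ lam ∈ Set.Icc a b, Φ x - lam * J x ≤ C} := fun C =>
    (isBounded_setOf_exists_sub_mul_le hΦ_nonneg
      (tendsto_cobounded_atTop_of_isLocalMin_of_leftInverse_fderiv hmin hΦ hΦ' hG hGΦ')
      hc hbc hfar C).subset fun _ ⟨lam, hlam, hle⟩ => ⟨lam, Set.Icc_subset_Icc_left ha hlam, hle⟩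
  have hseg : IsCompact (segment ℝ x₀ q) := by
    rw [segment_eq_image_lineMap]
    exact isCompact_Icc.image AffineMap.lineMap_continuous
  obtain ⟨γ, hγ, hbound⟩ := exists_norm_le_of_sub_mul_le_add_one
    (continuous_iff_continuousAt.2 fun x => (hΦ x).continuousAt)
    (continuous_iff_continuousAt.2 fun x => (hJ x).continuousAt) hseg hbounded
  obtain ⟨ρ, hρ, σ, hσ, hsphere⟩ :=
    exists_sphere_lt_sub_mul hΦ hΦ' hG hGΦ' hmin hΦ0 hc hbc hnear
  refine ⟨γ, hγ, fun lam hlam Ψ Ψ' hΨ hΨ' hΨ'c => ?_⟩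
  obtain ⟨hball, hsph⟩ := hsphere lam (Set.Icc_subset_Icc_left ha hlam)
  have h₀ : Φ x₀ - lam * J x₀ = 0 := by simp [hΦ0, hJ0]
  exact eventually_exists_three_solutions (J := fun x => lam * J x) hΦ hΦ'
    ⟨0, Set.forall_mem_range.2 hΦ_nonneg⟩ hG hGΦ' (fun x => (hJ x).const_mul lam)
    (hJ'.const_smul lam) (hJ'c.continuous_comp (continuous_const_smul lam)) hΨ hΨ' hΨ'c
    (fun C => (hbounded C).subset fun x hx => ⟨lam, hlam, hx⟩) hρ
    (fun x hx => h₀.trans_le (hball x hx)) ((hq lam hlam).trans_eq h₀.symm) hsph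
    (h₀.trans_lt hσ) (hbound lam hlam)

end RicceriFunctional

lemma isLocalMin_of_forall_ne_lt {X : Type*} [NormedAddCommGroup X] {f : X → ℝ} {x₀ : X} {ρ : ℝ}
    (hρ : 0 < ρ) (h : ∀ x, x ≠ x₀ → ‖x - x₀‖ < ρ → f x₀ < f x) : IsLocalMin f x₀ := by
  filter_upwards [Metric.ball_mem_nhds x₀ hρ] with x hx
  rcases eq_or_ne x x₀ with rfl | hne
  · exact le_rfl
  · exact (h x hne (mem_ball_iff_norm.1 hx)).le

theorem stmt8_general {X : Type*} [NormedAddCommGroup X] [NormedSpace ℝ X] [CompleteSpace X]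
    (Φ J : X → ℝ) (Φ' J' : X → X →L[ℝ] ℝ)
    (hΦ : ∀ x, HasFDerivAt Φ (Φ' x) x) (hΦ' : Continuous Φ')
    (hJ : ∀ x, HasFDerivAt J (J' x) x) (hJ' : Continuous J')
    (G : (X →L[ℝ] ℝ) → X) (hG : Continuous G) (hGΦ' : Function.LeftInverse G Φ')
    (hJ'c : IsCompactMap J') (x₀ : X) (hmin : IsLocalMin Φ x₀) (hΦ0 : Φ x₀ = 0) (hJ0 : J x₀ = 0)
    (a b : ℝ) (ha : 0 < a) (hab : a ≤ b)
    (hi : ∃ xbar : X, 0 < Φ xbar ∧ Φ xbar / a < J xbar)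
    (hii : ∃ ε > 0, ε ≤ 1 / b ∧ ∃ R > 0, ∃ r > 0,
      (∀ x : X, R ≤ ‖x‖ → J x ≤ (1 / b - ε) * Φ x) ∧
      (∀ x : X, x ≠ x₀ → ‖x - x₀‖ ≤ r → J x ≤ (1 / b - ε) * Φ x)) :
    ∃ γ > 0, ∀ lam ∈ Set.Icc a b, ∀ (Ψ : X → ℝ) (Ψ' : X → X →L[ℝ] ℝ),
      (∀ x, HasFDerivAt Ψ (Ψ' x) x) → Continuous Ψ' → IsCompactMap Ψ' →
        ∃ δ₀ > 0, ∀ μ ∈ Set.Icc (0 : ℝ) δ₀,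
          ∃ u₁ u₂ u₃ : X, u₁ ≠ u₂ ∧ u₁ ≠ u₃ ∧ u₂ ≠ u₃ ∧
            ∀ u ∈ ({u₁, u₂, u₃} : Set X), Φ' u = lam • J' u + μ • Ψ' u ∧ ‖u‖ ≤ γ := by
  obtain ⟨q, hΦq, hJq⟩ := hi
  obtain ⟨ε, hε, hεb, R, -, r, hr, hfar, hnear⟩ := hii
  have hb : 0 < b := ha.trans_le hab
  have hbc : b * (1 / b - ε) < 1 := by
    rw [mul_sub, mul_one_div_cancel hb.ne']
    exact sub_lt_self 1 (mul_pos hb hε)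
  have hnear' : ∀ᶠ x in 𝓝 x₀, J x ≤ (1 / b - ε) * Φ x := by
    filter_upwards [Metric.closedBall_mem_nhds x₀ hr] with x hx
    rcases eq_or_ne x x₀ with rfl | hne
    · simp [hΦ0, hJ0]
    · exact hnear x hne (mem_closedBall_iff_norm.1 hx)
  obtain ⟨γ, hγ, hsol⟩ := exists_radius_forall_eventually_exists_three_solutions hΦ hΦ' hJ hJ'
    hJ'c hG hGΦ' hmin hΦ0 hJ0 ha.le (sub_nonneg.2 hεb) hbc
    ((eventually_cobounded_le_norm R).mono hfar) hnear'
    fun lam hlam => sub_mul_neg_of_div_lt ha hΦq.le hJq hlam.1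
  refine ⟨γ, hγ, fun lam hlam Ψ Ψ' hΨ hΨ' hΨ'c => ?_⟩
  obtain ⟨δ₀, hδ₀, hball⟩ :=
    Metric.nhds_basis_closedBall.eventually_iff.1 (hsol lam hlam Ψ Ψ' hΨ hΨ' hΨ'c)
  refine ⟨δ₀, hδ₀, fun μ hμ => hball ?_⟩
  rw [mem_closedBall_zero_iff, Real.norm_of_nonneg hμ.1]
  exact hμ.2

theorem stmt8 {X : Type*} [NormedAddCommGroup X] [NormedSpace ℝ X] [CompleteSpace X]
    [TopologicalSpace.SeparableSpace X]
    -- X is reflexive: the canonical inclusion into the double dual is surjective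
    (hrefl : Function.Surjective (NormedSpace.inclusionInDoubleDual ℝ X))
    (Φ J : X → ℝ) (Φ' J' : X → X →L[ℝ] ℝ)
    -- Φ and J are C¹ with derivatives Φ' and J'
    (hΦdiff : ∀ x, HasFDerivAt Φ (Φ' x) x) (hΦ'cont : Continuous Φ')
    (hJdiff : ∀ x, HasFDerivAt J (J' x) x) (hJ'cont : Continuous J')
    -- Φ is sequentially weakly lower semicontinuous
    (hΦwlsc : ∀ (x : X) (xn : ℕ → X),
      (∀ f : X →L[ℝ] ℝ, Tendsto (fun n => f (xn n)) atTop (𝓝 (f x))) →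
      Φ x ≤ liminf (fun n => Φ (xn n)) atTop)
    -- Φ belongs to the class 𝔚_X
    (hΦW : ∀ (x : X) (xn : ℕ → X),
      (∀ f : X →L[ℝ] ℝ, Tendsto (fun n => f (xn n)) atTop (𝓝 (f x))) →
      liminf (fun n => Φ (xn n)) atTop ≤ Φ x →
      ∃ φ : ℕ → ℕ, StrictMono φ ∧ Tendsto (fun n => xn (φ n)) atTop (𝓝 x))
    -- Φ is bounded on each bounded subset of X
    (hΦbdd : ∀ s : Set X, IsBounded s → IsBounded (Φ '' s))
    -- Φ' admits a continuous inverse on X*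
    (Φ'inv : (X →L[ℝ] ℝ) → X) (hΦ'inv_cont : Continuous Φ'inv)
    (hΦ'inv_left : Function.LeftInverse Φ'inv Φ')
    (hΦ'inv_right : Function.RightInverse Φ'inv Φ')
    -- J' is a compact map
    (hJ'cpt : ∀ s : Set X, IsBounded s → IsCompact (closure (J' '' s)))
    -- Φ has a strict local minimum at x₀ with Φ(x₀) = J(x₀) = 0
    (x₀ : X)
    (hmin : ∃ ρ > 0, ∀ x : X, x ≠ x₀ → ‖x - x₀‖ < ρ → Φ x₀ < Φ x)
    (hΦ0 : Φ x₀ = 0) (hJ0 : J x₀ = 0)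
    (a b : ℝ) (ha : 0 < a) (hab : a ≤ b)
    -- (i)
    (hi : ∃ xbar : X, 0 < Φ xbar ∧ Φ xbar / a < J xbar)
    -- (ii)
    (hii : ∃ ε > 0, ε ≤ 1 / b ∧ ∃ R > 0, ∃ r > 0,
      (∀ x : X, R ≤ ‖x‖ → J x ≤ (1 / b - ε) * Φ x) ∧
      (∀ x : X, x ≠ x₀ → ‖x - x₀‖ ≤ r → J x ≤ (1 / b - ε) * Φ x)) :
    ∃ γ > 0, ∀ lam ∈ Set.Icc a b,
      ∀ (Ψ : X → ℝ) (Ψ' : X → X →L[ℝ] ℝ),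
        (∀ x, HasFDerivAt Ψ (Ψ' x) x) → Continuous Ψ' →
        (∀ s : Set X, IsBounded s → IsCompact (closure (Ψ' '' s))) →
        ∃ δ₀ > 0, ∀ μ ∈ Set.Icc (0 : ℝ) δ₀,
          ∃ u₁ u₂ u₃ : X, u₁ ≠ u₂ ∧ u₁ ≠ u₃ ∧ u₂ ≠ u₃ ∧
            ∀ u ∈ ({u₁, u₂, u₃} : Set X),
              Φ' u = lam • J' u + μ • Ψ' u ∧ ‖u‖ ≤ γ := by
  obtain ⟨_, hρ, hlt⟩ := hmin
  exact stmt8_general Φ J Φ' J' hΦdiff hΦ'cont hJdiff hJ'cont Φ'inv hΦ'inv_cont hΦ'inv_left hJ'cpt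
    x₀ (isLocalMin_of_forall_ne_lt hρ hlt) hΦ0 hJ0 a b ha hab hi hii
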